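/- Let S and G be real random variables on a common probability space with S ≥ 0 almost surely and S independent of G, and let U = max(S − G, S). Then for every x ∈ ℝ, P(U > x) = P(S − G > x) + ∫_{(0,∞)} ( P(S > x) − P(S > x + y) ) dP_G(y), where P_G denotes the law of G. -/

import Mathlib

open MeasureTheory ProbabilityTheory

/-- Tail identity for `U = max(S - G, S)` with `S ≥ 0` independent of `G`:
`P(U > x) = P(S - G > x) + ∫_{(0,∞)} (P(S > x) - P(S > x + y)) dP_G(y)`. -/
theorem tail_identity_max
    {Ω : Type*} [MeasureSpace Ω] [IsProbabilityMeasure (ℙ : Measure Ω)]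
    (S G : Ω → ℝ) (hS : Measurable S) (hG : Measurable G)
    (hS0 : ∀ᵐ ω, 0 ≤ S ω) (hind : IndepFun S G)
    (U : Ω → ℝ) (hU : ∀ ω, U ω = max (S ω - G ω) (S ω)) :
    ∀ x : ℝ,
      (ℙ {ω | x < U ω}).toReal =
        (ℙ {ω | x < S ω - G ω}).toReal +
        ∫ y in Set.Ioi (0 : ℝ),
          ((ℙ {ω | x < S ω}).toReal - (ℙ {ω | x + y < S ω}).toReal)
          ∂(Measure.map G ℙ) := by
  intro x
  have hGp : IsProbabilityMeasure (Measure.map G (ℙ : Measure Ω)) :=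
    Measure.isProbabilityMeasure_map hG.aemeasurable
  have hSp : IsProbabilityMeasure (Measure.map S (ℙ : Measure Ω)) :=
    Measure.isProbabilityMeasure_map hS.aemeasurable
  let T : Set (ℝ × ℝ) := {p | 0 < p.2 ∧ x < p.1 ∧ p.1 ≤ x + p.2}
  have hT : MeasurableSet T :=
    (measurableSet_lt measurable_const measurable_snd).inter
      ((measurableSet_lt measurable_const measurable_fst).inter
        (measurableSet_le measurable_fst (measurable_const.add measurable_snd)))
  let B : Set Ω := (fun ω => (S ω, G ω)) ⁻¹' T
  have hB : MeasurableSet B := (hS.prodMk hG) hT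
  have hsplit : {ω | x < U ω} = {ω | x < S ω - G ω} ∪ B := by
    ext ω
    simp only [Set.mem_setOf_eq, Set.mem_union, B, T, Set.mem_preimage, hU, lt_max_iff]
    constructor
    · intro h
      by_cases h1 : x < S ω - G ω
      · exact Or.inl h1
      · have h2 := h.resolve_left h1
        exact Or.inr ⟨by linarith, h2, by linarith⟩
    · rintro (h | h)
      · exact Or.inl h
      · exact Or.inr h.2.1
  have hdisj : Disjoint {ω | x < S ω - G ω} B := by
    rw [Set.disjoint_left]
    intro ω h1 h2
    have h1' : x < S ω - G ω := h1
    have h3 : S ω ≤ x + G ω := h2.2.2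
    linarith
  rw [hsplit, measure_union hdisj hB,
    ENNReal.toReal_add (measure_ne_top _ _) (measure_ne_top _ _)]
  congr 1
  have hprod := (indepFun_iff_map_prod_eq_prod_map_map hS.aemeasurable hG.aemeasurable).1 hind
  have hPB : (ℙ : Measure Ω) B = ∫⁻ y, Measure.map S ℙ ((fun s => (s, y)) ⁻¹' T)
      ∂(Measure.map G ℙ) := by
    rw [← Measure.prod_apply_symm hT, ← hprod, Measure.map_apply (hS.prodMk hG) hT]
  rw [hPB, ← integral_toReal (measurable_measure_prodMk_right hT).aemeasurable
    (Filter.Eventually.of_forall fun y => measure_lt_top _ _),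
    ← integral_indicator measurableSet_Ioi]
  congr 1
  ext y
  rw [Measure.map_apply hS (measurable_prodMk_right hT)]
  by_cases hy : 0 < y
  · rw [Set.indicator_of_mem (show y ∈ Set.Ioi (0 : ℝ) from hy)]
    have hsub : {ω | x + y < S ω} ⊆ {ω | x < S ω} := by
      intro ω h
      have h' : x + y < S ω := h
      show x < S ω
      linarith
    have hm : MeasurableSet {ω | x + y < S ω} := measurableSet_lt measurable_const hS
    rw [← ENNReal.toReal_sub_of_le (measure_mono hsub) (measure_ne_top _ _),
      ← measure_diff hsub hm.nullMeasurableSet (measure_ne_top _ _)]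
    congr 2
    ext ω
    simp [T, hy]
  · rw [Set.indicator_of_notMem (show y ∉ Set.Ioi (0 : ℝ) from hy)]
    have : S ⁻¹' ((fun s => (s, y)) ⁻¹' T) = ∅ := by
      ext ω
      simp [T, hy]
    rw [this]
    simp
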